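/- arXiv:1606.01819 — 5 statements merged into one kernel-verified Lean document; each statement's English description precedes it below -/
import Mathlib

section
/- For every t ∈ ℝ, the functions x and y are twice differentiable at t and satisfy the Newtonian two-body equations x''(t) = (G m₂ / ‖y(t) − x(t)‖³) (y(t) − x(t)) and y''(t) = (G m₁ / ‖x(t) − y(t)‖³) (x(t) − y(t)), where ‖·‖ denotes the Euclidean norm on ℝ². -/
open Real

/-!
The relative position `z = y - x` runs along the conic with polar equation `r = p / (1 - e cos φ)`,
where `p = (1 - e) r₀`, and the law for `θ'` says that `r² θ' = c p²` is conserved. Hence the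
velocity is `c p (-sin θ, cos θ - e)`, a circular hodograph, and differentiating it once more gives
`z'' = -(c² p³ / ‖z‖³) z`. Since `c² p³ = G (m₁ + m₂)`, this is the Kepler problem, and `x`, `y` are
the fixed multiples `-μ z`, `(1 - μ) z` of its solution.

For unbounded conics the denominator `D = 1 - e cos θ` can vanish at some angle, but `θ` never
reaches it: `D` solves the linear equation `D' = (c e D sin θ) D`, so it keeps its sign.
-/

theorem pos_of_hasDerivAt_mul_self {a g : ℝ → ℝ} {t₀ : ℝ} (ha : Continuous a)
    (hg : ∀ t, HasDerivAt g (a t * g t) t) (h₀ : 0 < g t₀) (t : ℝ) : 0 < g t := by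
  let A : ℝ → ℝ := fun s => ∫ τ in t₀..s, a τ
  have hasDerivAt_A (s : ℝ) : HasDerivAt A (a s) s :=
    (ha.integral_hasStrictDerivAt t₀ s).hasDerivAt
  have hasDerivAt_quotient (s : ℝ) : HasDerivAt (fun τ => g τ * exp (-A τ)) 0 s :=
    ((hg s).mul (hasDerivAt_A s).neg.exp).congr_deriv (by ring)
  have quotient_eq : g t * exp (-A t) = g t₀ * exp (-A t₀) :=
    is_const_of_deriv_eq_zero (fun s => (hasDerivAt_quotient s).differentiableAt)
      (fun s => (hasDerivAt_quotient s).deriv) t t₀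
  refine pos_of_mul_pos_left ?_ (exp_pos (-A t)).le
  rw [quotient_eq]
  positivity

theorem one_sub_mul_cos_pos {e c t₀ : ℝ} {θ : ℝ → ℝ}
    (hθ : ∀ t, HasDerivAt θ (c * (1 - e * cos (θ t)) ^ 2) t) (h₀ : 0 < 1 - e * cos (θ t₀)) (t : ℝ) :
    0 < 1 - e * cos (θ t) := by
  have continuous_θ : Continuous θ :=
    continuous_iff_continuousAt.2 fun s => (hθ s).continuousAt
  refine pos_of_hasDerivAt_mul_self (g := fun s => 1 - e * cos (θ s))
    (a := fun s => c * e * sin (θ s) * (1 - e * cos (θ s))) (by fun_prop) (fun s => ?_) h₀ t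
  exact (((hθ s).cos.const_mul e).const_sub 1).congr_deriv (by ring)

section Conic

variable {E : Type*} [NormedAddCommGroup E]

/-- The point at polar angle `φ` on the conic `r = p / (1 - e cos φ)` with a focus at the origin, in
the plane with axes `b 0` and `b 1`. The parameter `p` is the semi-latus rectum and `|e|` the
eccentricity; the point is `0` (by division by zero) at the asymptotic angles `e cos φ = 1`. -/
noncomputable def conicPoint [NormedSpace ℝ E] (b : Fin 2 → E) (p e φ : ℝ) : E :=
  (p / (1 - e * cos φ)) • (cos φ • b 0 + sin φ • b 1)

/-- The hodograph of the conic `conicPoint b p e`: its velocity at polar angle `φ` when the angle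
moves at the speed `(1 - e cos φ) ^ 2`. -/
noncomputable def conicVelocity [NormedSpace ℝ E] (b : Fin 2 → E) (p e φ : ℝ) : E :=
  p • (-sin φ • b 0 + (cos φ - e) • b 1)

theorem hasDerivAt_conicPoint [NormedSpace ℝ E] (b : Fin 2 → E) (p : ℝ) {e c t : ℝ} {θ : ℝ → ℝ}
    (hθ : HasDerivAt θ (c * (1 - e * cos (θ t)) ^ 2) t) (hD : 1 - e * cos (θ t) ≠ 0) :
    HasDerivAt (fun s => conicPoint b p e (θ s)) (c • conicVelocity b p e (θ t)) t := by
  have hasDerivAt_radius : HasDerivAt (fun s => p / (1 - e * cos (θ s)))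
      (-(p * c * e * sin (θ t))) t := by
    refine ((hasDerivAt_const t p).fun_div ((hθ.cos.const_mul e).const_sub 1) hD).congr_deriv ?_
    field_simp
    ring
  have hasDerivAt_direction := (hθ.cos.smul_const (b 0)).add (hθ.sin.smul_const (b 1))
  refine (hasDerivAt_radius.smul hasDerivAt_direction).congr_deriv ?_
  simp only [conicVelocity, Pi.add_apply]
  match_scalars
  · field_simp
    ring
  · field_simp
    linear_combination (-(p * c * e)) * sin_sq_add_cos_sq (θ t)

theorem hasDerivAt_conicVelocity [NormedSpace ℝ E] (b : Fin 2 → E) (p : ℝ) {e c t : ℝ} {θ : ℝ → ℝ}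
    (hθ : HasDerivAt θ (c * (1 - e * cos (θ t)) ^ 2) t) (hD : 1 - e * cos (θ t) ≠ 0) :
    HasDerivAt (fun s => conicVelocity b p e (θ s))
      (-(c * (1 - e * cos (θ t)) ^ 3) • conicPoint b p e (θ t)) t := by
  refine (((hθ.sin.neg.smul_const (b 0)).add
    ((hθ.cos.sub_const e).smul_const (b 1))).const_smul p).congr_deriv ?_
  simp only [conicPoint]
  match_scalars <;> field_simp

theorem norm_conicPoint [InnerProductSpace ℝ E] {b : Fin 2 → E} (hb : Orthonormal ℝ b)
    {p e φ : ℝ} (hp : 0 ≤ p) (hD : 0 ≤ 1 - e * cos φ) :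
    ‖conicPoint b p e φ‖ = p / (1 - e * cos φ) := by
  have norm_direction : ‖cos φ • b 0 + sin φ • b 1‖ = 1 := by
    have orthogonal : inner ℝ (cos φ • b 0) (sin φ • b 1) = 0 := by
      rw [real_inner_smul_left, real_inner_smul_right, hb.inner_eq_zero (by decide), mul_zero,
        mul_zero]
    rw [← pow_eq_one_iff_of_nonneg (norm_nonneg _) two_ne_zero, sq,
      norm_add_sq_eq_norm_sq_add_norm_sq_real orthogonal]
    simp [norm_smul, hb.norm_eq_one, ← sq]
  rw [conicPoint, norm_smul, norm_direction, mul_one, norm_of_nonneg (by positivity)]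

theorem eq_smul_conicPoint_basisFun {w : EuclideanSpace ℝ (Fin 2)} {a k p e φ : ℝ}
    (hk : k = a * (p / (1 - e * cos φ))) (hw : w.ofLp = k • ![cos φ, sin φ]) :
    w = a • conicPoint (EuclideanSpace.basisFun (Fin 2) ℝ) p e φ := by
  ext i
  rw [hw, hk]
  fin_cases i <;> simp [conicPoint, mul_assoc]

end Conic

section Kepler

variable {E : Type*} [NormedAddCommGroup E]

/-- `z` solves the Kepler problem `z'' = -(k / ‖z‖³) z` for all times. At a collision `z t = 0` the
force is `0`, by division by zero. -/
structure IsKeplerMotion [NormedSpace ℝ E] (k : ℝ) (z : ℝ → E) : Prop where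
  differentiable : Differentiable ℝ z
  differentiable_deriv : Differentiable ℝ (deriv z)
  deriv_deriv (t : ℝ) : deriv (deriv z) t = -(k / ‖z t‖ ^ 3) • z t

theorem isKeplerMotion_conicPoint [InnerProductSpace ℝ E] {b : Fin 2 → E} (hb : Orthonormal ℝ b)
    {p e c : ℝ} {θ : ℝ → ℝ} (hp : 0 < p)
    (hθ : ∀ t, HasDerivAt θ (c * (1 - e * cos (θ t)) ^ 2) t) (hD : ∀ t, 0 < 1 - e * cos (θ t)) :
    IsKeplerMotion (c ^ 2 * p ^ 3) fun t => conicPoint b p e (θ t) := by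
  have velocity (t : ℝ) := hasDerivAt_conicPoint b p (hθ t) (hD t).ne'
  have acceleration (t : ℝ) := (hasDerivAt_conicVelocity b p (hθ t) (hD t).ne').const_smul c
  have deriv_eq : deriv (fun t => conicPoint b p e (θ t)) =
      fun t => c • conicVelocity b p e (θ t) := funext fun t => (velocity t).deriv
  refine ⟨fun t => (velocity t).differentiableAt, ?_, fun t => ?_⟩
  · rw [deriv_eq]
    exact fun t => (acceleration t).differentiableAt
  · have hDt := hD t
    rw [deriv_eq, norm_conicPoint hb hp.le hDt.le]
    refine (acceleration t).deriv.trans ?_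
    rw [smul_smul]
    congr 1
    field_simp

theorem IsKeplerMotion.deriv_deriv_const_smul [NormedSpace ℝ E] {k : ℝ} {z : ℝ → E}
    (hz : IsKeplerMotion k z) (a t : ℝ) :
    DifferentiableAt ℝ (fun s => a • z s) t ∧ DifferentiableAt ℝ (deriv fun s => a • z s) t ∧
      deriv (deriv fun s => a • z s) t = -(a * k / ‖z t‖ ^ 3) • z t := by
  have deriv_eq : deriv (fun s => a • z s) = fun s => a • deriv z s :=
    funext fun s => deriv_fun_const_smul a (hz.differentiable s)
  refine ⟨(hz.differentiable t).const_smul a, ?_, ?_⟩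
  · rw [deriv_eq]
    exact (hz.differentiable_deriv t).const_smul a
  · rw [deriv_eq, deriv_fun_const_smul a (hz.differentiable_deriv t), hz.deriv_deriv, smul_smul]
    congr 1
    ring

theorem IsKeplerMotion.two_body_equations [NormedSpace ℝ E] {G m₁ m₂ μ : ℝ} {z x y : ℝ → E}
    (hz : IsKeplerMotion (G * (m₁ + m₂)) z) (hM : m₁ + m₂ ≠ 0) (hμ : μ = m₂ / (m₁ + m₂))
    (hx : ∀ t, x t = -μ • z t) (hy : ∀ t, y t = (1 - μ) • z t) (t : ℝ) :
    DifferentiableAt ℝ x t ∧ DifferentiableAt ℝ (deriv x) t ∧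
    DifferentiableAt ℝ y t ∧ DifferentiableAt ℝ (deriv y) t ∧
    deriv (deriv x) t = (G * m₂ / ‖y t - x t‖ ^ 3) • (y t - x t) ∧
    deriv (deriv y) t = (G * m₁ / ‖x t - y t‖ ^ 3) • (x t - y t) := by
  have relative_position : y t - x t = z t := by rw [hx, hy]; module
  have mass₂ : μ * (m₁ + m₂) = m₂ := by rw [hμ, div_mul_cancel₀ _ hM]
  have mass₁ : (1 - μ) * (m₁ + m₂) = m₁ := by linear_combination -mass₂
  obtain ⟨hx₁, hx₂, hx''⟩ := hz.deriv_deriv_const_smul (-μ) t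
  obtain ⟨hy₁, hy₂, hy''⟩ := hz.deriv_deriv_const_smul (1 - μ) t
  rw [← funext hx] at hx₁ hx₂ hx''
  rw [← funext hy] at hy₁ hy₂ hy''
  refine ⟨hx₁, hx₂, hy₁, hy₂, ?_, ?_⟩
  · rw [hx'', relative_position]
    congr 1
    linear_combination (G / ‖z t‖ ^ 3) * mass₂
  · rw [hy'', norm_sub_rev, ← neg_sub (y t), relative_position, smul_neg, ← neg_smul]
    congr 1
    linear_combination (-G / ‖z t‖ ^ 3) * mass₁

end Kepler

theorem two_body_equations_general {E : Type*} [NormedAddCommGroup E] [InnerProductSpace ℝ E]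
    {b : Fin 2 → E} (hb : Orthonormal ℝ b) {G m₁ m₂ μ p e c t₀ : ℝ} {θ : ℝ → ℝ} {x y : ℝ → E}
    (hM : m₁ + m₂ ≠ 0) (hμ : μ = m₂ / (m₁ + m₂)) (hp : 0 < p) (hc : c ^ 2 * p ^ 3 = G * (m₁ + m₂))
    (hθ : ∀ t, HasDerivAt θ (c * (1 - e * cos (θ t)) ^ 2) t) (hθ₀ : 0 < 1 - e * cos (θ t₀))
    (hx : ∀ t, x t = -μ • conicPoint b p e (θ t))
    (hy : ∀ t, y t = (1 - μ) • conicPoint b p e (θ t)) (t : ℝ) :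
    DifferentiableAt ℝ x t ∧ DifferentiableAt ℝ (deriv x) t ∧
    DifferentiableAt ℝ y t ∧ DifferentiableAt ℝ (deriv y) t ∧
    deriv (deriv x) t = (G * m₂ / ‖y t - x t‖ ^ 3) • (y t - x t) ∧
    deriv (deriv y) t = (G * m₁ / ‖x t - y t‖ ^ 3) • (x t - y t) := by
  have kepler := isKeplerMotion_conicPoint hb hp hθ (one_sub_mul_cos_pos hθ hθ₀)
  rw [hc] at kepler
  exact kepler.two_body_equations hM hμ hx hy t

/-- Newtonian two-body equations for the explicit elliptic solution:
for every `t`, `x` and `y` are twice differentiable at `t` and satisfy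
`x'' = (G m₂ / ‖y - x‖³) (y - x)` and `y'' = (G m₁ / ‖x - y‖³) (x - y)`. -/
theorem two_body_equations
    (G r₀ m₁ m₂ e : ℝ) (hG : 0 < G) (hr₀ : 0 < r₀) (hm₁ : 0 < m₁) (hm₂ : 0 < m₂)
    (he₀ : 0 < e) (he₁ : e < 1)
    (c μ : ℝ)
    (hc : c = Real.sqrt (G * (m₁ + m₂) / ((1 - e) ^ 3 * r₀ ^ 3)))
    (hμ : μ = m₂ / (m₁ + m₂))
    (θ : ℝ → ℝ) (hθdiff : Differentiable ℝ θ)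
    (hθ' : ∀ t, deriv θ t = c * (1 - e * Real.cos (θ t)) ^ 2)
    (hθ0 : θ 0 = 0)
    (x y : ℝ → EuclideanSpace ℝ (Fin 2))
    (hx : ∀ t, x t =
      (-((1 - e) * μ * r₀ / (1 - e * Real.cos (θ t)))) • ![Real.cos (θ t), Real.sin (θ t)])
    (hy : ∀ t, y t =
      ((1 - e) * (1 - μ) * r₀ / (1 - e * Real.cos (θ t))) • ![Real.cos (θ t), Real.sin (θ t)]) :
    ∀ t : ℝ,
      DifferentiableAt ℝ x t ∧ DifferentiableAt ℝ (deriv x) t ∧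
      DifferentiableAt ℝ y t ∧ DifferentiableAt ℝ (deriv y) t ∧
      deriv (deriv x) t = (G * m₂ / ‖y t - x t‖ ^ 3) • (y t - x t) ∧
      deriv (deriv y) t = (G * m₁ / ‖x t - y t‖ ^ 3) • (x t - y t) := by
  have he : 0 < 1 - e := sub_pos.2 he₁
  have hcp : c ^ 2 * ((1 - e) * r₀) ^ 3 = G * (m₁ + m₂) := by
    rw [hc, sq_sqrt (by positivity), mul_pow, div_mul_cancel₀ _ (by positivity)]
  exact two_body_equations_general (EuclideanSpace.basisFun (Fin 2) ℝ).orthonormal (t₀ := 0)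
    (add_pos hm₁ hm₂).ne' hμ (mul_pos he hr₀) hcp (fun t => hθ' t ▸ (hθdiff t).hasDerivAt)
    (by simpa [hθ0] using he₁) (fun t => eq_smul_conicPoint_basisFun (by ring) (hx t))
    (fun t => eq_smul_conicPoint_basisFun (by ring) (hy t))
end

section
/- For every t ∈ ℝ one has (1−e) r₀/(1+e) ≤ ‖x(t) − y(t)‖ ≤ r₀, and the maximum distance r₀ is attained at t = 0, i.e. ‖x(0) − y(0)‖ = r₀. (Here ‖·‖ denotes the Euclidean norm on ℝ².) -/
open Real

/-!
The separation `x t - y t` is `-ρ • u`, where `u` is the unit vector at angle `θ t` and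
`ρ = (1 - e) r₀ / (1 - e cos θ)` is the radius of a conic with a focus at the origin: the mass
ratio `μ` cancels, so the two bodies behave like one particle on that conic. The extreme values
of `ρ` are those of `1 - e cos θ`, and the angle `0` is the apoapsis.
-/

section ConicRadius

variable {p e : ℝ}

/-- The polar equation of a conic with semi-latus rectum `p` and eccentricity `e`, as the distance
to the focus at angle `φ`. The sign convention puts the apoapsis at `φ = 0` when `0 ≤ e < 1`. -/
noncomputable def conicRadius (p e φ : ℝ) : ℝ :=
  p / (1 - e * cos φ)

theorem abs_mul_cos_le_abs (e φ : ℝ) : |e * cos φ| ≤ |e| := by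
  rw [abs_mul]
  exact mul_le_of_le_one_right (abs_nonneg e) (abs_cos_le_one φ)

theorem one_sub_mul_cos_pos_s3 (he : |e| < 1) (φ : ℝ) : 0 < 1 - e * cos φ :=
  sub_pos.2 ((le_abs_self _).trans_lt ((abs_mul_cos_le_abs e φ).trans_lt he))

theorem conicRadius_nonneg (hp : 0 ≤ p) (he : |e| < 1) (φ : ℝ) : 0 ≤ conicRadius p e φ :=
  div_nonneg hp (one_sub_mul_cos_pos_s3 he φ).le

theorem div_one_add_abs_le_conicRadius (hp : 0 ≤ p) (he : |e| < 1) (φ : ℝ) :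
    p / (1 + |e|) ≤ conicRadius p e φ := by
  have lower : -|e| ≤ e * cos φ := neg_le_of_abs_le (abs_mul_cos_le_abs e φ)
  exact div_le_div_of_nonneg_left hp (one_sub_mul_cos_pos_s3 he φ) (by linarith)

theorem conicRadius_le_div_one_sub_abs (hp : 0 ≤ p) (he : |e| < 1) (φ : ℝ) :
    conicRadius p e φ ≤ p / (1 - |e|) := by
  have upper : e * cos φ ≤ |e| := le_of_abs_le (abs_mul_cos_le_abs e φ)
  exact div_le_div_of_nonneg_left hp (sub_pos.2 he) (by linarith)

theorem conicRadius_zero (p e : ℝ) : conicRadius p e 0 = p / (1 - e) := by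
  rw [conicRadius, cos_zero, mul_one]

end ConicRadius

theorem norm_vec_cos_sin (φ : ℝ) : ‖!₂[cos φ, sin φ]‖ = 1 := by
  simp [EuclideanSpace.norm_eq]

theorem norm_neg_mul_smul_sub_one_sub_mul_smul {E : Type*} [SeminormedAddCommGroup E]
    [NormedSpace ℝ E] (μ ρ : ℝ) (u : E) :
    ‖(-(μ * ρ)) • u - ((1 - μ) * ρ) • u‖ = |ρ| * ‖u‖ := by
  rw [← sub_smul, norm_smul, norm_eq_abs, ← abs_neg ρ]
  congr 2
  ring

theorem norm_sub_eq_conicRadius {r₀ e μ φ : ℝ} (hr₀ : 0 ≤ r₀) (he : |e| < 1)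
    {a b : EuclideanSpace ℝ (Fin 2)}
    (ha : a = (-((1 - e) * μ * r₀ / (1 - e * cos φ))) • ![cos φ, sin φ])
    (hb : b = ((1 - e) * (1 - μ) * r₀ / (1 - e * cos φ)) • ![cos φ, sin φ]) :
    ‖a - b‖ = conicRadius ((1 - e) * r₀) e φ := by
  have a_eq : a = (-(μ * conicRadius ((1 - e) * r₀) e φ)) • !₂[cos φ, sin φ] := by
    refine WithLp.ofLp_injective 2 (ha.trans ?_)
    rw [conicRadius, WithLp.ofLp_smul]
    congr 1
    ring
  have b_eq : b = ((1 - μ) * conicRadius ((1 - e) * r₀) e φ) • !₂[cos φ, sin φ] := by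
    refine WithLp.ofLp_injective 2 (hb.trans ?_)
    rw [conicRadius, WithLp.ofLp_smul]
    congr 1
    ring
  have semilatus_nonneg : 0 ≤ (1 - e) * r₀ :=
    mul_nonneg (sub_nonneg.2 (lt_of_abs_lt he).le) hr₀
  rw [a_eq, b_eq, norm_neg_mul_smul_sub_one_sub_mul_smul, norm_vec_cos_sin, mul_one,
    abs_of_nonneg (conicRadius_nonneg semilatus_nonneg he φ)]

theorem two_body_distance_bounds_general {T : Type*} {r₀ e μ : ℝ} (hr₀ : 0 ≤ r₀)
    (he₀ : 0 ≤ e) (he₁ : e < 1) {θ : T → ℝ} {t₀ : T} (hθ : θ t₀ = 0)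
    {x y : T → EuclideanSpace ℝ (Fin 2)}
    (hx : ∀ t, x t = (-((1 - e) * μ * r₀ / (1 - e * cos (θ t)))) • ![cos (θ t), sin (θ t)])
    (hy : ∀ t, y t =
      ((1 - e) * (1 - μ) * r₀ / (1 - e * cos (θ t))) • ![cos (θ t), sin (θ t)]) :
    (∀ t, (1 - e) * r₀ / (1 + e) ≤ ‖x t - y t‖ ∧ ‖x t - y t‖ ≤ r₀) ∧ ‖x t₀ - y t₀‖ = r₀ := by
  have abs_e : |e| = e := abs_of_nonneg he₀
  have abs_e_lt : |e| < 1 := abs_e.trans_lt he₁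
  have semilatus_nonneg : 0 ≤ (1 - e) * r₀ := mul_nonneg (sub_nonneg.2 he₁.le) hr₀
  have apoapsis : (1 - e) * r₀ / (1 - e) = r₀ := mul_div_cancel_left₀ r₀ (sub_pos.2 he₁).ne'
  have dist_eq (t : T) : ‖x t - y t‖ = conicRadius ((1 - e) * r₀) e (θ t) :=
    norm_sub_eq_conicRadius hr₀ abs_e_lt (hx t) (hy t)
  refine ⟨fun t => ⟨?_, ?_⟩, ?_⟩
  · simpa only [dist_eq, abs_e] using
      div_one_add_abs_le_conicRadius semilatus_nonneg abs_e_lt (θ t)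
  · simpa only [dist_eq, abs_e, apoapsis] using
      conicRadius_le_div_one_sub_abs semilatus_nonneg abs_e_lt (θ t)
  · rw [dist_eq, hθ, conicRadius_zero, apoapsis]

theorem two_body_distance_bounds
    (G r₀ m₁ m₂ e : ℝ) (hG : 0 < G) (hr₀ : 0 < r₀) (hm₁ : 0 < m₁) (hm₂ : 0 < m₂)
    (he₀ : 0 < e) (he₁ : e < 1)
    (c μ : ℝ)
    (hc : c = Real.sqrt (G * (m₁ + m₂) / ((1 - e) ^ 3 * r₀ ^ 3)))
    (hμ : μ = m₂ / (m₁ + m₂))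
    (θ : ℝ → ℝ) (hθdiff : Differentiable ℝ θ)
    (hθ' : ∀ t, deriv θ t = c * (1 - e * Real.cos (θ t)) ^ 2)
    (hθ0 : θ 0 = 0)
    (x y : ℝ → EuclideanSpace ℝ (Fin 2))
    (hx : ∀ t, x t =
      (-((1 - e) * μ * r₀ / (1 - e * Real.cos (θ t)))) • ![Real.cos (θ t), Real.sin (θ t)])
    (hy : ∀ t, y t =
      ((1 - e) * (1 - μ) * r₀ / (1 - e * Real.cos (θ t))) • ![Real.cos (θ t), Real.sin (θ t)]) :
    (∀ t : ℝ, (1 - e) * r₀ / (1 + e) ≤ ‖x t - y t‖ ∧ ‖x t - y t‖ ≤ r₀) ∧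
    ‖x 0 - y 0‖ = r₀ :=
  two_body_distance_bounds_general hr₀.le he₀.le he₁ hθ0 hx hy
end

section
/- The function θ is strictly increasing on ℝ and is surjective onto ℝ (in particular θ(t) → +∞ as t → +∞ and θ(t) → −∞ as t → −∞). -/
open Filter

section DerivBoundedBelow

variable {f : ℝ → ℝ} {C : ℝ}

theorem tendsto_atTop_of_eventually_le_deriv (hC : 0 < C) (hf : ∀ᶠ x in atTop, C ≤ deriv f x) :
    Tendsto f atTop atTop := by
  obtain ⟨a, ha⟩ := eventually_atTop.1 hf
  have hdiff : ∀ x ∈ Set.Ici a, DifferentiableAt ℝ f x := fun x hx ↦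
    differentiableAt_of_deriv_ne_zero (hC.trans_le (ha x hx)).ne'
  have hgrowth : ∀ x ≥ a, f a + C * (x - a) ≤ f x := by
    intro x hx
    have hmvt : C * (x - a) ≤ f x - f a :=
      (convex_Ici a).mul_sub_le_image_sub_of_le_deriv
        (fun y hy ↦ (hdiff y hy).continuousAt.continuousWithinAt)
        (fun y hy ↦ (hdiff y (interior_subset hy)).differentiableWithinAt)
        (fun y hy ↦ ha y (interior_subset hy)) a Set.self_mem_Ici x hx hx
    linarith
  have hline : Tendsto (fun x ↦ f a + C * (x - a)) atTop atTop :=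
    tendsto_atTop_add_const_left _ _ <|
      (tendsto_atTop_add_const_right _ (-a) tendsto_id).const_mul_atTop hC
  exact tendsto_atTop_mono' _ (eventually_atTop.2 ⟨a, hgrowth⟩) hline

theorem tendsto_atBot_of_eventually_le_deriv (hC : 0 < C) (hf : ∀ᶠ x in atBot, C ≤ deriv f x) :
    Tendsto f atBot atBot := by
  have hreflect : ∀ᶠ x in atTop, C ≤ deriv (fun y ↦ -f (-y)) x := by
    filter_upwards [tendsto_neg_atTop_atBot.eventually hf] with x hx
    simpa only [deriv.fun_neg, deriv_comp_neg, neg_neg] using hx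
  have htop : Tendsto (fun y ↦ -f (-y)) atTop atTop :=
    tendsto_atTop_of_eventually_le_deriv hC hreflect
  simpa only [Function.comp_def, neg_neg] using
    tendsto_neg_atTop_atBot.comp (htop.comp tendsto_neg_atBot_atTop)

end DerivBoundedBelow

theorem one_sub_abs_le_one_sub_mul_cos (e x : ℝ) : 1 - |e| ≤ 1 - e * Real.cos x := by
  have hcos : e * Real.cos x ≤ |e| :=
    calc e * Real.cos x ≤ |e| * |Real.cos x| := (le_abs_self _).trans_eq (abs_mul _ _)
      _ ≤ |e| := mul_le_of_le_one_right (abs_nonneg e) (Real.abs_cos_le_one x)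
  linarith

theorem angular_ode_strictMono_surjective_general {c e : ℝ} (hc : 0 < c) (he : |e| < 1)
    {θ : ℝ → ℝ} (hθ : ∀ t, HasDerivAt θ (c * (1 - e * Real.cos (θ t)) ^ 2) t) :
    StrictMono θ ∧ Function.Surjective θ ∧
      Tendsto θ atTop atTop ∧ Tendsto θ atBot atBot := by
  have hgap : 0 < 1 - |e| := sub_pos.2 he
  have hmin : 0 < c * (1 - |e|) ^ 2 := mul_pos hc (pow_pos hgap 2)
  have hspeed : ∀ t, c * (1 - |e|) ^ 2 ≤ deriv θ t := by
    intro t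
    rw [(hθ t).deriv]
    gcongr ?_ * ?_ ^ 2
    exact one_sub_abs_le_one_sub_mul_cos e (θ t)
  have hcont : Continuous θ := continuous_iff_continuousAt.2 fun t ↦ (hθ t).continuousAt
  have htop : Tendsto θ atTop atTop :=
    tendsto_atTop_of_eventually_le_deriv hmin (.of_forall hspeed)
  have hbot : Tendsto θ atBot atBot :=
    tendsto_atBot_of_eventually_le_deriv hmin (.of_forall hspeed)
  exact ⟨strictMono_of_deriv_pos fun t ↦ hmin.trans_le (hspeed t),
    hcont.surjective htop hbot, htop, hbot⟩

/-- The solution `θ` of the angular ODE is strictly increasing and surjective onto `ℝ`;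
in particular `θ(t) → +∞` as `t → +∞` and `θ(t) → -∞` as `t → -∞`. -/
theorem angular_ode_strictMono_surjective (c e : ℝ) (hc : 0 < c) (he₀ : 0 < e) (he₁ : e < 1)
    (θ : ℝ → ℝ) (hθdiff : Differentiable ℝ θ)
    (hθ' : ∀ t, deriv θ t = c * (1 - e * Real.cos (θ t)) ^ 2)
    (hθ0 : θ 0 = 0) :
    StrictMono θ ∧ Function.Surjective θ ∧
      Tendsto θ atTop atTop ∧ Tendsto θ atBot atBot :=
  angular_ode_strictMono_surjective_general hc (by rwa [abs_of_pos he₀])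
    fun t ↦ hθ' t ▸ (hθdiff t).hasDerivAt
end

section
/- Setting T = 2π √( r₀³ / (G(1+e)³(m₁+m₂)) ), the two-body motion is periodic with period T: for every t ∈ ℝ, x(t + T) = x(t) and y(t + T) = y(t). -/
open Real

/-!
Kepler's equation straightens the motion. In a polar angle `θ` measured from the apoapsis, the
eccentric anomaly `E` is obtained from `θ` by a Möbius transformation of the circle, and the mean
anomaly `M = E + e sin E` satisfies `dM/dθ = (1 - e²)^(3/2) / (1 - e cos θ)²`. Hence
`θ' = c (1 - e cos θ)²` makes `M` grow at the constant rate `c (1 - e²)^(3/2)`. As `M` is a strictly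
increasing function of `θ` that commutes with translation by `2π`, the angle `θ` advances by exactly
`2π` each time `M` does, that is, after time `2π / (c (1 - e²)^(3/2))`.
-/

theorem apply_add_eq_of_hasDerivAt_comp {F θ : ℝ → ℝ} {n p q T : ℝ} (hF : Function.Injective F)
    (hFp : ∀ u, F (u + p) = F u + q) (hFθ : ∀ t, HasDerivAt (F ∘ θ) n t) (hT : n * T = q) (t : ℝ) :
    θ (t + T) = θ t + p := by
  have hderiv (s : ℝ) : HasDerivAt (fun s ↦ F (θ s) - n * s) 0 s :=
    ((hFθ s).sub ((hasDerivAt_id s).const_mul n)).congr_deriv (by ring)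
  have hconst : F (θ (t + T)) - n * (t + T) = F (θ t) - n * t :=
    is_const_of_deriv_eq_zero (fun s ↦ (hderiv s).differentiableAt) (fun s ↦ (hderiv s).deriv) _ _
  apply hF
  rw [hFp]
  linear_combination hconst + hT

theorem one_sub_mul_cos_pos_s9 {a : ℝ} (ha : |a| < 1) (u : ℝ) : 0 < 1 - a * cos u := by
  have hlt : |a * cos u| < 1 := by
    rw [abs_mul]
    exact (mul_le_of_le_one_right (abs_nonneg a) (abs_cos_le_one u)).trans_lt ha
  linarith [le_abs_self (a * cos u)]

theorem sqrt_one_sub_sq_pos {e : ℝ} (he : |e| < 1) : 0 < √(1 - e ^ 2) :=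
  sqrt_pos.2 (sub_pos.2 ((sq_lt_one_iff_abs_lt_one e).2 he))

theorem sq_sqrt_one_sub_sq {e : ℝ} (he : |e| ≤ 1) : √(1 - e ^ 2) ^ 2 = 1 - e ^ 2 :=
  sq_sqrt (sub_nonneg.2 ((sq_le_one_iff_abs_le_one e).2 he))

/-- The lift to `ℝ` of the circle map `z ↦ (z - b) / (1 - b z)`, where `z = exp (i u)`. This map
multiplies `z` by `(1 - b z⁻¹) / (1 - b z)`, whose argument is `2 arctan (b sin u / (1 - b cos u))`;
no choice of branch is involved when `|b| < 1`. -/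
noncomputable def mobiusAngle (b u : ℝ) : ℝ :=
  u + 2 * arctan (b * sin u / (1 - b * cos u))

theorem mobiusAngle_add_two_pi (b u : ℝ) :
    mobiusAngle b (u + 2 * π) = mobiusAngle b u + 2 * π := by
  simp only [mobiusAngle, sin_add_two_pi, cos_add_two_pi]
  ring

section

variable {b u : ℝ}

theorem one_add_div_one_sub_mul_cos_sq (h : 1 - b * cos u ≠ 0) :
    1 + (b * sin u / (1 - b * cos u)) ^ 2 =
      (1 + b ^ 2 - 2 * b * cos u) / (1 - b * cos u) ^ 2 := by
  field_simp
  linear_combination b ^ 2 * sin_sq_add_cos_sq u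

theorem one_add_sq_sub_two_mul_mul_cos_pos (h : 1 - b * cos u ≠ 0) :
    0 < 1 + b ^ 2 - 2 * b * cos u :=
  calc 0 < (1 - b * cos u) ^ 2 + (b * sin u) ^ 2 := by positivity
    _ = 1 + b ^ 2 - 2 * b * cos u := by linear_combination b ^ 2 * sin_sq_add_cos_sq u

theorem hasDerivAt_mobiusAngle (h : 1 - b * cos u ≠ 0) :
    HasDerivAt (mobiusAngle b) ((1 - b ^ 2) / (1 + b ^ 2 - 2 * b * cos u)) u := by
  have hquot : HasDerivAt (fun u ↦ b * sin u / (1 - b * cos u))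
      (b * (cos u - b) / (1 - b * cos u) ^ 2) u := by
    refine (((hasDerivAt_sin u).const_mul b).div
      (((hasDerivAt_cos u).const_mul b).const_sub 1) h).congr_deriv ?_
    congr 1
    linear_combination -b ^ 2 * sin_sq_add_cos_sq u
  refine ((hasDerivAt_id u).add (hquot.arctan.const_mul 2)).congr_deriv ?_
  have hpos := one_add_sq_sub_two_mul_mul_cos_pos h
  rw [one_add_div_one_sub_mul_cos_sq h]
  field_simp
  ring

theorem cos_mobiusAngle (h : 1 - b * cos u ≠ 0) :
    cos (mobiusAngle b u) = ((1 + b ^ 2) * cos u - 2 * b) / (1 + b ^ 2 - 2 * b * cos u) := by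
  have hpos := one_add_sq_sub_two_mul_mul_cos_pos h
  have hcos_sq : cos (arctan (b * sin u / (1 - b * cos u))) ^ 2 =
      (1 - b * cos u) ^ 2 / (1 + b ^ 2 - 2 * b * cos u) := by
    rw [cos_sq_arctan, one_add_div_one_sub_mul_cos_sq h, one_div_div]
  have hsin : sin (arctan (b * sin u / (1 - b * cos u))) =
      b * sin u / (1 - b * cos u) * cos (arctan (b * sin u / (1 - b * cos u))) := by
    rw [← tan_mul_cos (cos_arctan_pos _).ne', tan_arctan]
  have hcos_two : cos (2 * arctan (b * sin u / (1 - b * cos u))) =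
      (2 * (1 - b * cos u) ^ 2 - (1 + b ^ 2 - 2 * b * cos u)) / (1 + b ^ 2 - 2 * b * cos u) := by
    rw [cos_two_mul, hcos_sq, sub_div, div_self hpos.ne', mul_div_assoc]
  have hsin_two : sin (2 * arctan (b * sin u / (1 - b * cos u))) =
      2 * (b * sin u * (1 - b * cos u)) / (1 + b ^ 2 - 2 * b * cos u) := by
    rw [sin_two_mul, hsin, mul_assoc 2, mul_assoc (_ / _), ← sq, hcos_sq]
    field_simp
  rw [mobiusAngle, cos_add, hcos_two, hsin_two, ← mul_div_assoc, ← mul_div_assoc, ← sub_div]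
  congr 1
  linear_combination -2 * b * (1 - b * cos u) * sin_sq_add_cos_sq u

end

/-- The number `b` with `2 b / (1 + b ^ 2) = e` and `|b| < 1`, when `|e| < 1`: the Möbius parameter
that relates the polar angle to the eccentric anomaly on an orbit of eccentricity `e`. -/
noncomputable def eccentricityParameter (e : ℝ) : ℝ :=
  e / (1 + √(1 - e ^ 2))

/-- The eccentric anomaly at polar angle `θ` on an ellipse of eccentricity `e`, both angles being
measured from the apoapsis, so that the radius is proportional to `1 / (1 - e cos θ)`. -/
noncomputable def eccentricAnomaly (e θ : ℝ) : ℝ :=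
  mobiusAngle (eccentricityParameter e) θ

/-- The mean anomaly at polar angle `θ`, given by Kepler's equation; the sign of `e` is the one for
angles measured from the apoapsis. -/
noncomputable def meanAnomaly (e θ : ℝ) : ℝ :=
  eccentricAnomaly e θ + e * sin (eccentricAnomaly e θ)

theorem meanAnomaly_add_two_pi (e θ : ℝ) : meanAnomaly e (θ + 2 * π) = meanAnomaly e θ + 2 * π := by
  simp only [meanAnomaly, eccentricAnomaly, mobiusAngle_add_two_pi, sin_add_two_pi]
  ring

section

variable {e : ℝ}

theorem abs_eccentricityParameter_lt_one (he : |e| < 1) : |eccentricityParameter e| < 1 := by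
  have hs := sqrt_one_sub_sq_pos he
  rw [eccentricityParameter, abs_div, abs_of_pos (add_pos one_pos hs), div_lt_one (by positivity)]
  linarith

theorem one_add_eccentricityParameter_sq (he : |e| ≤ 1) :
    1 + eccentricityParameter e ^ 2 = 2 / (1 + √(1 - e ^ 2)) := by
  rw [eccentricityParameter]
  field_simp
  linear_combination sq_sqrt_one_sub_sq he

theorem one_sub_eccentricityParameter_sq (he : |e| ≤ 1) :
    1 - eccentricityParameter e ^ 2 = 2 * √(1 - e ^ 2) / (1 + √(1 - e ^ 2)) := by
  rw [show 1 - eccentricityParameter e ^ 2 = 2 - (1 + eccentricityParameter e ^ 2) by ring,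
    one_add_eccentricityParameter_sq he]
  field_simp
  ring

theorem one_add_eccentricityParameter_sq_sub (he : |e| ≤ 1) (θ : ℝ) :
    1 + eccentricityParameter e ^ 2 - 2 * eccentricityParameter e * cos θ =
      2 / (1 + √(1 - e ^ 2)) * (1 - e * cos θ) := by
  rw [one_add_eccentricityParameter_sq he, eccentricityParameter]
  ring

theorem hasDerivAt_eccentricAnomaly (he : |e| < 1) (θ : ℝ) :
    HasDerivAt (eccentricAnomaly e) (√(1 - e ^ 2) / (1 - e * cos θ)) θ := by
  have hd := one_sub_mul_cos_pos_s9 he θ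
  refine (hasDerivAt_mobiusAngle
    (one_sub_mul_cos_pos_s9 (abs_eccentricityParameter_lt_one he) θ).ne').congr_deriv ?_
  rw [one_sub_eccentricityParameter_sq he.le, one_add_eccentricityParameter_sq_sub he.le]
  field_simp

theorem cos_eccentricAnomaly (he : |e| < 1) (θ : ℝ) :
    cos (eccentricAnomaly e θ) = (cos θ - e) / (1 - e * cos θ) := by
  have hd := one_sub_mul_cos_pos_s9 he θ
  rw [eccentricAnomaly,
    cos_mobiusAngle (one_sub_mul_cos_pos_s9 (abs_eccentricityParameter_lt_one he) θ).ne',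
    one_add_eccentricityParameter_sq_sub he.le, one_add_eccentricityParameter_sq he.le,
    eccentricityParameter]
  field_simp

theorem hasDerivAt_meanAnomaly (he : |e| < 1) (θ : ℝ) :
    HasDerivAt (meanAnomaly e) (√(1 - e ^ 2) ^ 3 / (1 - e * cos θ) ^ 2) θ := by
  have hE := hasDerivAt_eccentricAnomaly he θ
  refine (hE.add (hE.sin.const_mul e)).congr_deriv ?_
  have hd := one_sub_mul_cos_pos_s9 he θ
  rw [cos_eccentricAnomaly he, pow_succ √_, sq_sqrt_one_sub_sq he.le]
  field_simp
  ring

theorem strictMono_meanAnomaly (he : |e| < 1) : StrictMono (meanAnomaly e) := by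
  refine strictMono_of_deriv_pos fun θ ↦ ?_
  have hs := sqrt_one_sub_sq_pos he
  have hd := one_sub_mul_cos_pos_s9 he θ
  rw [(hasDerivAt_meanAnomaly he θ).deriv]
  positivity

theorem hasDerivAt_meanAnomaly_comp {c t : ℝ} {θ : ℝ → ℝ} (he : |e| < 1)
    (hθ : HasDerivAt θ (c * (1 - e * cos (θ t)) ^ 2) t) :
    HasDerivAt (meanAnomaly e ∘ θ) (c * √(1 - e ^ 2) ^ 3) t := by
  refine ((hasDerivAt_meanAnomaly he (θ t)).comp t hθ).congr_deriv ?_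
  have hd := one_sub_mul_cos_pos_s9 he (θ t)
  field_simp

theorem meanMotion_mul_period {k r : ℝ} (hk : 0 < k) (hr : 0 < r) (he : |e| < 1) :
    √(k / ((1 - e) ^ 3 * r ^ 3)) * √(1 - e ^ 2) ^ 3 * (2 * π * √(r ^ 3 / (k * (1 + e) ^ 3))) =
      2 * π := by
  obtain ⟨he_gt, he_lt⟩ := abs_lt.1 he
  have h_add : 0 < 1 + e := by linarith
  suffices h : √(k / ((1 - e) ^ 3 * r ^ 3)) * √(1 - e ^ 2) ^ 3 * √(r ^ 3 / (k * (1 + e) ^ 3)) = 1 by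
    linear_combination 2 * π * h
  refine (pow_eq_one_iff_of_nonneg (by positivity) two_ne_zero).1 ?_
  calc (√(k / ((1 - e) ^ 3 * r ^ 3)) * √(1 - e ^ 2) ^ 3 * √(r ^ 3 / (k * (1 + e) ^ 3))) ^ 2
    _ = √(k / ((1 - e) ^ 3 * r ^ 3)) ^ 2 * (√(1 - e ^ 2) ^ 2) ^ 3 *
          √(r ^ 3 / (k * (1 + e) ^ 3)) ^ 2 := by ring
    _ = k / ((1 - e) ^ 3 * r ^ 3) * ((1 - e) * (1 + e)) ^ 3 * (r ^ 3 / (k * (1 + e) ^ 3)) := by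
      rw [sq_sqrt_one_sub_sq he.le, sq_sqrt (by positivity), sq_sqrt (by positivity)]
      ring
    _ = 1 := by field_simp [sub_ne_zero.2 he_lt.ne']

end

theorem two_body_periodic_general
    (G r₀ m₁ m₂ e : ℝ) (hG : 0 < G) (hr₀ : 0 < r₀) (hm : 0 < m₁ + m₂) (he : |e| < 1)
    (θ : ℝ → ℝ)
    (hθ : ∀ t, HasDerivAt θ
      (√(G * (m₁ + m₂) / ((1 - e) ^ 3 * r₀ ^ 3)) * (1 - e * cos (θ t)) ^ 2) t)
    (x y : ℝ → EuclideanSpace ℝ (Fin 2))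
    (hx : ∀ t, x t =
      (-((1 - e) * (m₂ / (m₁ + m₂)) * r₀ / (1 - e * cos (θ t)))) • ![cos (θ t), sin (θ t)])
    (hy : ∀ t, y t =
      ((1 - e) * (1 - m₂ / (m₁ + m₂)) * r₀ / (1 - e * cos (θ t))) • ![cos (θ t), sin (θ t)])
    (t : ℝ) :
    x (t + 2 * π * √(r₀ ^ 3 / (G * (1 + e) ^ 3 * (m₁ + m₂)))) = x t ∧
      y (t + 2 * π * √(r₀ ^ 3 / (G * (1 + e) ^ 3 * (m₁ + m₂)))) = y t := by
  rw [mul_right_comm G]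
  set T := 2 * π * √(r₀ ^ 3 / (G * (m₁ + m₂) * (1 + e) ^ 3))
  have hrev : θ (t + T) = θ t + 2 * π :=
    apply_add_eq_of_hasDerivAt_comp (strictMono_meanAnomaly he).injective
      (meanAnomaly_add_two_pi e) (fun t ↦ hasDerivAt_meanAnomaly_comp he (hθ t))
      (meanMotion_mul_period (mul_pos hG hm) hr₀ he) t
  constructor <;> apply WithLp.ofLp_injective
  · rw [hx, hx, hrev, cos_add_two_pi, sin_add_two_pi]
  · rw [hy, hy, hrev, cos_add_two_pi, sin_add_two_pi]

theorem two_body_periodic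
    (G r₀ m₁ m₂ e : ℝ) (hG : 0 < G) (hr₀ : 0 < r₀) (hm₁ : 0 < m₁) (hm₂ : 0 < m₂)
    (he₀ : 0 < e) (he₁ : e < 1)
    (c μ : ℝ)
    (hc : c = Real.sqrt (G * (m₁ + m₂) / ((1 - e) ^ 3 * r₀ ^ 3)))
    (hμ : μ = m₂ / (m₁ + m₂))
    (θ : ℝ → ℝ) (hθdiff : Differentiable ℝ θ)
    (hθ' : ∀ t, deriv θ t = c * (1 - e * Real.cos (θ t)) ^ 2)
    (hθ0 : θ 0 = 0)
    (x y : ℝ → EuclideanSpace ℝ (Fin 2))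
    (hx : ∀ t, x t =
      (-((1 - e) * μ * r₀ / (1 - e * Real.cos (θ t)))) • ![Real.cos (θ t), Real.sin (θ t)])
    (hy : ∀ t, y t =
      ((1 - e) * (1 - μ) * r₀ / (1 - e * Real.cos (θ t))) • ![Real.cos (θ t), Real.sin (θ t)]) :
    ∀ t : ℝ, x (t + 2 * Real.pi * Real.sqrt (r₀ ^ 3 / (G * (1 + e) ^ 3 * (m₁ + m₂)))) = x t ∧
      y (t + 2 * Real.pi * Real.sqrt (r₀ ^ 3 / (G * (1 + e) ^ 3 * (m₁ + m₂)))) = y t := by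
  subst hc hμ
  exact two_body_periodic_general G r₀ m₁ m₂ e hG hr₀ (add_pos hm₁ hm₂)
    ((abs_of_pos he₀).trans_lt he₁) θ (fun t ↦ hθ' t ▸ (hθdiff t).hasDerivAt) x y hx hy
end

section
/- The relative orbit is an ellipse of eccentricity e: writing (X(t), Y(t)) = y(t) − x(t) ∈ ℝ² and p = (1−e) r₀, one has (1 − e²)·X(t)² − 2 p e·X(t) + Y(t)² = p² for all t ∈ ℝ; equivalently, the relative position lies for all time on the ellipse with semi-major axis a = r₀/(1+e), center (p e/(1−e²), 0), and eccentricity e. -/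
open Real

/-!
The bodies lie on opposite sides of the origin, at distances splitting `r = p / (1 - e cos θ)` in
the ratio `μ : 1 - μ`, so the relative position has polar coordinates `(r, θ)`. The polar equation
says `r = p + e X`, where `X = r cos θ`; squaring it and using `X² + Y² = r²` gives the conic.
-/

theorem conic_cartesian_iff_sq_add_sq_eq {R : Type*} [CommRing R] {e p X Y : R} :
    (1 - e ^ 2) * X ^ 2 - 2 * p * e * X + Y ^ 2 = p ^ 2 ↔ X ^ 2 + Y ^ 2 = (p + e * X) ^ 2 := by
  constructor <;> intro h <;> linear_combination h

theorem conic_cartesian_of_polar {e p r φ : ℝ} (polar : r * (1 - e * cos φ) = p) :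
    (1 - e ^ 2) * (r * cos φ) ^ 2 - 2 * p * e * (r * cos φ) + (r * sin φ) ^ 2 = p ^ 2 := by
  have radius_eq : r = p + e * (r * cos φ) := by linear_combination polar
  rw [conic_cartesian_iff_sq_add_sq_eq]
  calc (r * cos φ) ^ 2 + (r * sin φ) ^ 2
      = r ^ 2 := by linear_combination r ^ 2 * cos_sq_add_sin_sq φ
    _ = (p + e * (r * cos φ)) ^ 2 := congrArg (· ^ 2) radius_eq

theorem mul_cos_lt_one {e : ℝ} (he : |e| < 1) (φ : ℝ) : e * cos φ < 1 :=
  calc e * cos φ ≤ |e| * |cos φ| := (le_abs_self _).trans_eq (abs_mul _ _)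
    _ ≤ |e| := mul_le_of_le_one_right (abs_nonneg e) (abs_cos_le_one φ)
    _ < 1 := he

theorem mul_one_sub_smul_sub_neg_mul_smul {R M : Type*} [Ring R] [AddCommGroup M] [Module R M]
    (a μ : R) (u : M) : (a * (1 - μ)) • u - (-(a * μ)) • u = a • u := by
  rw [← sub_smul, sub_neg_eq_add, ← mul_add, sub_add_cancel, mul_one]

theorem relative_orbit_is_ellipse_general {T : Type*} (r₀ e μ : ℝ) (θ : T → ℝ)
    (hθ : ∀ t, e * cos (θ t) ≠ 1)
    (x y : T → EuclideanSpace ℝ (Fin 2))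
    (hx : ∀ t, x t =
      (-((1 - e) * μ * r₀ / (1 - e * cos (θ t)))) • ![cos (θ t), sin (θ t)])
    (hy : ∀ t, y t =
      ((1 - e) * (1 - μ) * r₀ / (1 - e * cos (θ t))) • ![cos (θ t), sin (θ t)])
    (t : T) :
    (1 - e ^ 2) * ((y t - x t) 0) ^ 2 - 2 * ((1 - e) * r₀) * e * ((y t - x t) 0) +
      ((y t - x t) 1) ^ 2 = ((1 - e) * r₀) ^ 2 := by
  set r := (1 - e) * r₀ / (1 - e * cos (θ t))
  have relative_position : (y t - x t).ofLp = r • ![cos (θ t), sin (θ t)] := by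
    rw [WithLp.ofLp_sub, hx, hy, mul_right_comm _ μ, mul_right_comm _ (1 - μ),
      mul_div_right_comm _ μ, mul_div_right_comm _ (1 - μ), mul_one_sub_smul_sub_neg_mul_smul]
  have polar : r * (1 - e * cos (θ t)) = (1 - e) * r₀ :=
    div_mul_cancel₀ _ (sub_ne_zero.mpr (hθ t).symm)
  rw [relative_position]
  exact conic_cartesian_of_polar polar

theorem relative_orbit_is_ellipse
    (G r₀ m₁ m₂ e : ℝ) (hG : 0 < G) (hr₀ : 0 < r₀) (hm₁ : 0 < m₁) (hm₂ : 0 < m₂)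
    (he₀ : 0 < e) (he₁ : e < 1)
    (c μ : ℝ)
    (hc : c = Real.sqrt (G * (m₁ + m₂) / ((1 - e) ^ 3 * r₀ ^ 3)))
    (hμ : μ = m₂ / (m₁ + m₂))
    (θ : ℝ → ℝ) (hθdiff : Differentiable ℝ θ)
    (hθ' : ∀ t, deriv θ t = c * (1 - e * Real.cos (θ t)) ^ 2)
    (hθ0 : θ 0 = 0)
    (x y : ℝ → EuclideanSpace ℝ (Fin 2))
    (hx : ∀ t, x t =
      (-((1 - e) * μ * r₀ / (1 - e * Real.cos (θ t)))) • ![Real.cos (θ t), Real.sin (θ t)])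
    (hy : ∀ t, y t =
      ((1 - e) * (1 - μ) * r₀ / (1 - e * Real.cos (θ t))) • ![Real.cos (θ t), Real.sin (θ t)]) :
    ∀ t : ℝ,
      (1 - e ^ 2) * ((y t - x t) 0) ^ 2 - 2 * ((1 - e) * r₀) * e * ((y t - x t) 0) +
        ((y t - x t) 1) ^ 2 = ((1 - e) * r₀) ^ 2 := by
  exact relative_orbit_is_ellipse_general r₀ e μ θ
    (fun t ↦ (mul_cos_lt_one (abs_lt.mpr ⟨by linarith, he₁⟩) (θ t)).ne) x y hx hy
end
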